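/- There exists an absolute constant K such that for every finite set A of positive real numbers with |A| ≥ 2, one has max(|A·A|, |A−A|) ≥ K · |A|^{14/11} / (log|A|)^{2/11}. -/

import Mathlib

open Finset Pointwise

noncomputable def dlt (X Y : Finset ℝ) (s : ℝ) : ℕ :=
  ((X ×ˢ Y).filter (fun p => p.1 - p.2 = s)).card

noncomputable def sg (X Y : Finset ℝ) (s : ℝ) : ℕ :=
  ((X ×ˢ Y).filter (fun p => p.1 + p.2 = s)).card

noncomputable def En (X Y : Finset ℝ) : ℝ :=
  ∑ s ∈ X - X, (dlt X X s : ℝ) * (dlt Y Y s : ℝ)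

noncomputable def E3 (X : Finset ℝ) : ℝ :=
  ∑ s ∈ X - X, (dlt X X s : ℝ) ^ 3

noncomputable def E15 (X : Finset ℝ) : ℝ :=
  ∑ s ∈ X - X, (dlt X X s : ℝ) ^ ((3 : ℝ) / 2)

/-!
The incidence bound replaces the plane by a grid. If `x` has `t` representations as a sum `a + b` in
`A + B`, then for each `c ∈ C` the curve `a ↦ (a * c, x - a)`, monotone in each coordinate, meets
`(A * C) × B` in `t` points. Cutting both axes into about `t / 4` blocks, such a curve visits only
about `t / 2` cells, so at least `t` ordered pairs of distinct points on it share a cell; and two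
such points determine `(x, c)`. Counting cell-sharing pairs gives Szemerédi–Trotter type weak `L³`
bounds for the representation function, hence bounds for `E₃(A)` and `E(A, A - A)` in terms of
`A * A`.

In the other direction, writing `A_x = A ∩ (x + A)`, the Cauchy–Schwarz inequality and the
Katz–Koester inclusion `A_x - A ⊆ (A - A) ∩ (x + (A - A))`, summed over `x` by Hölder, give the
Schoen–Shkredov inequality `|A|⁸ ≤ |A - A| E₃(A) E(A, A - A)`. Inserting the two upper bounds yields
the estimate when `0 ∉ A`, and removing `0` from `A` changes only the constant.
-/

section Collisions

variable {α β : Type*} [DecidableEq β]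

/-- The ordered pairs of elements of `S`, diagonal ones included, on which `f` takes the same
value. Their number is the second moment of the fibre sizes of `f`. -/
def collisions (S : Finset α) (f : α → β) : Finset (α × α) :=
  {y ∈ S ×ˢ S | f y.1 = f y.2}

theorem mem_collisions {S : Finset α} {f : α → β} {y : α × α} :
    y ∈ collisions S f ↔ (y.1 ∈ S ∧ y.2 ∈ S) ∧ f y.1 = f y.2 := by
  rw [collisions, mem_filter, mem_product]

theorem collisions_eq_of_forall_iff {γ : Type*} [DecidableEq γ] {S : Finset α} {f : α → β}
    {g : α → γ} (h : ∀ a ∈ S, ∀ b ∈ S, f a = f b ↔ g a = g b) :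
    collisions S f = collisions S g :=
  filter_congr fun _ hy ↦ h _ (mem_product.1 hy).1 _ (mem_product.1 hy).2

theorem sq_card_le_card_mul_card_collisions {S : Finset α} {W : Finset β} {f : α → β}
    (h : ∀ a ∈ S, f a ∈ W) : #S ^ 2 ≤ #W * #(collisions S f) := by
  have card_fibre (w : β) : #{y ∈ collisions S f | f y.1 = w} = #{a ∈ S | f a = w} ^ 2 := by
    rw [sq, ← card_product]
    congr 1
    ext ⟨a, b⟩
    simp only [mem_filter, mem_collisions, mem_product]
    grind
  calc #S ^ 2 = (∑ w ∈ W, #{a ∈ S | f a = w}) ^ 2 := by rw [← card_eq_sum_card_fiberwise h]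
    _ ≤ #W * ∑ w ∈ W, #{a ∈ S | f a = w} ^ 2 := sq_sum_le_card_mul_sum_sq
    _ = #W * #(collisions S f) := by
      rw [card_eq_sum_card_fiberwise (s := collisions S f) (f := fun y ↦ f y.1) (t := W)
        fun y hy ↦ h _ (mem_collisions.1 hy).1.1]
      simp only [card_fibre]

theorem card_collisions_le_add_card_filter_ne [DecidableEq α] (S : Finset α) (f : α → β) :
    #(collisions S f) ≤ #S + #{y ∈ collisions S f | y.1 ≠ y.2} := by
  rw [← card_filter_add_card_filter_not (s := collisions S f) (fun y ↦ y.1 = y.2)]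
  gcongr
  refine card_le_card_of_injOn Prod.fst (fun y hy ↦ ?_) fun y hy z hz h ↦ ?_
  · exact (mem_collisions.1 (mem_filter.1 hy).1).1.1
  · exact Prod.ext h ((mem_filter.1 hy).2.symm.trans (h.trans (mem_filter.1 hz).2))

-- The map `f + g` takes fewer than `2 * s` values and has the same collisions as `(f, g)`.
theorem sq_card_le_mul_card_collisions_of_monovaryOn {T : Finset α} {f g : α → ℕ} {s : ℕ}
    (hfg : MonovaryOn f g T) (hf : ∀ a ∈ T, f a < s) (hg : ∀ a ∈ T, g a < s) :
    #T ^ 2 ≤ 2 * s * #(collisions T fun a ↦ (f a, g a)) := by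
  have collisions_add : collisions T (fun a ↦ (f a, g a)) = collisions T (fun a ↦ f a + g a) := by
    refine collisions_eq_of_forall_iff fun a ha b hb ↦ ?_
    have hab : g a < g b → f a ≤ f b := hfg ha hb
    have hba : g b < g a → f b ≤ f a := hfg hb ha
    rw [Prod.mk.injEq]
    lia
  rw [collisions_add, ← card_range (2 * s)]
  refine sq_card_le_card_mul_card_collisions fun a ha ↦ mem_range.2 ?_
  linarith [hf a ha, hg a ha]

theorem sq_card_le_mul_card_collisions_of_antivaryOn {T : Finset α} {f g : α → ℕ} {s : ℕ}
    (hfg : AntivaryOn f g T) (hf : ∀ a ∈ T, f a < s) (hg : ∀ a ∈ T, g a < s) :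
    #T ^ 2 ≤ 2 * s * #(collisions T fun a ↦ (f a, g a)) := by
  have collisions_reflect :
      collisions T (fun a ↦ (f a, g a)) = collisions T (fun a ↦ (f a, s - 1 - g a)) := by
    refine collisions_eq_of_forall_iff fun a ha b hb ↦ ?_
    rw [Prod.mk.injEq, Prod.mk.injEq]
    have := hg a ha
    have := hg b hb
    lia
  rw [collisions_reflect]
  refine sq_card_le_mul_card_collisions_of_monovaryOn (fun a ha b hb h ↦ hfg hb ha ?_) hf
    fun a ha ↦ ?_
  · lia
  · have := hg a ha
    lia

theorem card_le_card_collisions_ne [DecidableEq α] {T : Finset α} {f : α → β} {s : ℕ}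
    (hT : #T ^ 2 ≤ 2 * s * #(collisions T f)) (hs : 4 * s ≤ #T) :
    #T ≤ #{y ∈ collisions T f | y.1 ≠ y.2} := by
  rcases T.eq_empty_or_nonempty with rfl | hne
  · simp
  have := card_collisions_le_add_card_filter_ne T f
  set U := {y ∈ collisions T f | y.1 ≠ y.2}
  have : #T * (2 * #T) ≤ #T * (#T + #U) := by
    calc #T * (2 * #T) = 2 * #T ^ 2 := by ring
      _ ≤ 2 * (2 * s * #(collisions T f)) := by gcongr
      _ = 4 * s * #(collisions T f) := by ring
      _ ≤ #T * (#T + #U) := by gcongr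
  have := Nat.le_of_mul_le_mul_left this hne.card_pos
  lia

theorem card_collisions_div_le {S : Finset α} {r : α → ℕ} (hr : Set.InjOn r S) {m : ℕ}
    (hm : 0 < m) : #(collisions S fun a ↦ r a / m) ≤ #S * m := by
  have card_block (a : α) : #{b ∈ S | r a / m = r b / m} ≤ m := by
    calc #{b ∈ S | r a / m = r b / m} ≤ #(Ico (r a / m * m) (r a / m * m + m)) := by
          refine card_le_card_of_injOn r (fun b hb ↦ ?_)
            (hr.mono (coe_subset.2 (filter_subset _ _)))
          rw [(mem_filter.1 hb).2, coe_Ico, Set.mem_Ico]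
          exact ⟨Nat.div_mul_le_self _ _, Nat.lt_div_mul_add hm⟩
      _ = m := by rw [Nat.card_Ico, Nat.add_sub_cancel_left]
  rw [collisions, card_filter, sum_product]
  simp only [← card_filter]
  exact sum_le_card_nsmul _ _ m fun a _ ↦ card_block a

end Collisions

section Blocks

variable {α : Type*} [LinearOrder α]

theorem exists_monotone_injOn_lt_card (P : Finset α) :
    ∃ r : α → ℕ, Monotone r ∧ Set.InjOn r P ∧ ∀ p ∈ P, r p < #P := by
  have hlt {p q : α} (hp : p ∈ P) (hpq : p < q) : #{x ∈ P | x < p} < #{x ∈ P | x < q} := by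
    refine card_lt_card (ssubset_iff_of_subset ?_ |>.2 ⟨p, by simp [hp, hpq], by simp⟩)
    exact monotone_filter_right _ fun x _ hx ↦ lt_trans hx hpq
  refine ⟨fun p ↦ #{x ∈ P | x < p}, fun p q hpq ↦ ?_, StrictMonoOn.injOn fun p hp q _ ↦ hlt hp,
    fun p hp ↦ ?_⟩
  · exact card_le_card (monotone_filter_right _ fun x _ hx ↦ lt_of_lt_of_le hx hpq)
  · exact card_lt_card (filter_ssubset.2 ⟨p, hp, lt_irrefl p⟩)

theorem exists_monotone_card_collisions_le {P : Finset α} {s : ℕ} (hs : 0 < s) (hsP : s ≤ #P) :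
    ∃ k : α → ℕ, Monotone k ∧ (∀ p ∈ P, k p < s) ∧ s * #(collisions P k) ≤ 2 * #P ^ 2 := by
  obtain ⟨r, hr_mono, hr_inj, hr_lt⟩ := exists_monotone_injOn_lt_card P
  set m := #P / s + 1 with hm
  have hm0 : 0 < m := Nat.succ_pos _
  have card_lt : #P < s * m := Nat.lt_mul_div_succ _ hs
  have mul_le : s * m ≤ 2 * #P := by
    have := Nat.mul_div_le #P s
    rw [hm, mul_add]
    lia
  refine ⟨fun p ↦ r p / m, fun p q h ↦ Nat.div_le_div_right (hr_mono h), fun p hp ↦ ?_, ?_⟩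
  · exact (Nat.div_lt_iff_lt_mul hm0).2 ((hr_lt p hp).trans card_lt)
  · calc s * #(collisions P fun p ↦ r p / m) ≤ s * (#P * m) := by
          gcongr
          exact card_collisions_div_le hr_inj hm0
      _ = #P * (s * m) := by ring
      _ ≤ #P * (2 * #P) := by gcongr
      _ = 2 * #P ^ 2 := by ring

end Blocks

section Moments

variable {ι : Type*} {S : Finset ι} {f : ι → ℕ} {M : ℝ}

theorem sum_sum_Ioc_eq_sum_Ioc_card_mul {N : ℕ} (hN : ∀ i ∈ S, f i ≤ N) (k : ℕ) (g : ℕ → ℝ) :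
    ∑ i ∈ S, ∑ t ∈ Ioc k (f i), g t = ∑ t ∈ Ioc k N, #{i ∈ S | t ≤ f i} * g t := by
  have Ioc_eq (i) (hi : i ∈ S) : Ioc k (f i) = {t ∈ Ioc k N | t ≤ f i} := by
    ext t
    have := hN i hi
    simp only [mem_Ioc, mem_filter]
    lia
  calc ∑ i ∈ S, ∑ t ∈ Ioc k (f i), g t = ∑ i ∈ S, ∑ t ∈ Ioc k N, if t ≤ f i then g t else 0 :=
        sum_congr rfl fun i hi ↦ by rw [Ioc_eq i hi, sum_filter]
    _ = ∑ t ∈ Ioc k N, #{i ∈ S | t ≤ f i} * g t := by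
        rw [sum_comm]
        refine sum_congr rfl fun t _ ↦ ?_
        rw [← sum_filter, sum_const, nsmul_eq_mul]

theorem pow_three_le_sum_Ioc (n : ℕ) : (n : ℝ) ^ 3 ≤ ∑ t ∈ Ioc 0 n, 3 * (t : ℝ) ^ 2 := by
  induction n with
  | zero => simp
  | succ n ih =>
    rw [← insert_Ioc_right_eq_Ioc_add_one (Nat.zero_le n), sum_insert (by simp)]
    push_cast
    nlinarith [(Nat.cast_nonneg n : (0 : ℝ) ≤ n)]

theorem sq_le_add_sum_Ioc (k n : ℕ) : (n : ℝ) ^ 2 ≤ k * n + ∑ t ∈ Ioc k n, 2 * (t : ℝ) := by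
  rcases le_total n k with h | h
  · rw [Ioc_eq_empty_of_le h, sum_empty, add_zero, sq]
    gcongr
  induction n, h using Nat.le_induction with
  | base => simp [sq]
  | succ n h ih =>
    rw [← insert_Ioc_right_eq_Ioc_add_one h, sum_insert (by simp)]
    push_cast
    nlinarith [(Nat.cast_nonneg k : (0 : ℝ) ≤ k)]

theorem sum_pow_three_le_of_card_mul_pow_three_le
    (hM : ∀ t, #{i ∈ S | t ≤ f i} * (t : ℝ) ^ 3 ≤ M) {N : ℕ} (hN : ∀ i ∈ S, f i ≤ N) :
    ∑ i ∈ S, (f i : ℝ) ^ 3 ≤ 3 * M * (1 + Real.log N) := by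
  have hM0 : 0 ≤ M := by simpa using hM 0
  have sum_inv_le : ∑ t ∈ Ioc 0 N, (t : ℝ)⁻¹ ≤ 1 + Real.log N := by
    simpa [harmonic_eq_sum_Icc, ← Icc_add_one_left_eq_Ioc] using harmonic_le_one_add_log N
  calc ∑ i ∈ S, (f i : ℝ) ^ 3 ≤ ∑ i ∈ S, ∑ t ∈ Ioc 0 (f i), 3 * (t : ℝ) ^ 2 :=
        sum_le_sum fun i _ ↦ pow_three_le_sum_Ioc _
    _ = ∑ t ∈ Ioc 0 N, #{i ∈ S | t ≤ f i} * (3 * (t : ℝ) ^ 2) :=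
        sum_sum_Ioc_eq_sum_Ioc_card_mul hN _ _
    _ ≤ ∑ t ∈ Ioc 0 N, 3 * M * (t : ℝ)⁻¹ := by
        refine sum_le_sum fun t ht ↦ ?_
        have ht0 : (0 : ℝ) < t := by exact_mod_cast (mem_Ioc.1 ht).1
        rw [le_mul_inv_iff₀ ht0]
        linarith [hM t]
    _ = 3 * M * ∑ t ∈ Ioc 0 N, (t : ℝ)⁻¹ := by rw [mul_sum]
    _ ≤ 3 * M * (1 + Real.log N) := by gcongr

theorem sum_Ioc_inv_sq_le_inv {k : ℕ} (hk : k ≠ 0) (n : ℕ) :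
    ∑ t ∈ Ioc k n, ((t : ℝ) ^ 2)⁻¹ ≤ (k : ℝ)⁻¹ := by
  rcases le_total k n with h | h
  · exact (sum_Ioc_inv_sq_le_sub hk h).trans (sub_le_self _ (by positivity))
  · rw [Ioc_eq_empty_of_le h, sum_empty]
    positivity

theorem sum_sq_le_of_card_mul_pow_three_le
    (hM : ∀ t, #{i ∈ S | t ≤ f i} * (t : ℝ) ^ 3 ≤ M) {u : ℝ} (hu : 1 ≤ u) :
    ∑ i ∈ S, (f i : ℝ) ^ 2 ≤ 2 * u * ∑ i ∈ S, (f i : ℝ) + 2 * M / u := by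
  have hM0 : 0 ≤ M := by simpa using hM 0
  have hu0 : 0 < u := by linarith
  set k := ⌈u⌉₊
  have huk : u ≤ k := Nat.le_ceil u
  have hku : (k : ℝ) ≤ 2 * u := by linarith [Nat.ceil_lt_add_one hu0.le]
  have hk0 : k ≠ 0 := (Nat.ceil_pos.2 hu0).ne'
  set N := S.sup f
  calc ∑ i ∈ S, (f i : ℝ) ^ 2
      ≤ ∑ i ∈ S, (k * (f i : ℝ) + ∑ t ∈ Ioc k (f i), 2 * (t : ℝ)) :=
        sum_le_sum fun i _ ↦ sq_le_add_sum_Ioc _ _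
    _ = k * ∑ i ∈ S, (f i : ℝ) + ∑ t ∈ Ioc k N, #{i ∈ S | t ≤ f i} * (2 * (t : ℝ)) := by
        rw [sum_add_distrib, ← mul_sum,
          sum_sum_Ioc_eq_sum_Ioc_card_mul (N := N) fun i hi ↦ le_sup hi]
    _ ≤ k * ∑ i ∈ S, (f i : ℝ) + ∑ t ∈ Ioc k N, 2 * M * ((t : ℝ) ^ 2)⁻¹ := by
        gcongr k * _ + ∑ t ∈ _, ?_ with t ht
        have ht0 : (0 : ℝ) < t := by exact_mod_cast (Nat.zero_le k).trans_lt (mem_Ioc.1 ht).1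
        rw [le_mul_inv_iff₀ (by positivity)]
        linarith [hM t]
    _ ≤ 2 * u * ∑ i ∈ S, (f i : ℝ) + 2 * M * u⁻¹ := by
        rw [← mul_sum]
        gcongr
        exact (sum_Ioc_inv_sq_le_inv hk0 N).trans (inv_anti₀ hu0 huk)

theorem pow_three_sum_le_card_mul_sq_sum_rpow (S : Finset ι) {w : ι → ℝ} (hw : ∀ i ∈ S, 0 ≤ w i) :
    (∑ i ∈ S, w i) ^ 3 ≤ #S * (∑ i ∈ S, w i ^ (3 / 2 : ℝ)) ^ 2 := by
  have hsum : 0 ≤ ∑ i ∈ S, w i := sum_nonneg hw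
  have power_mean := Real.rpow_sum_le_const_mul_sum_rpow_of_nonneg S
    (by norm_num : (1 : ℝ) ≤ 3 / 2) hw
  calc (∑ i ∈ S, w i) ^ 3 = ((∑ i ∈ S, w i) ^ (3 / 2 : ℝ)) ^ 2 := by
        rw [← Real.rpow_mul_natCast hsum]; norm_num
    _ ≤ ((#S : ℝ) ^ (3 / 2 - 1 : ℝ) * ∑ i ∈ S, w i ^ (3 / 2 : ℝ)) ^ 2 := by gcongr
    _ = #S * (∑ i ∈ S, w i ^ (3 / 2 : ℝ)) ^ 2 := by
        rw [mul_pow, ← Real.rpow_mul_natCast (Nat.cast_nonneg _)]; norm_num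

end Moments

section AddCommGroup

open scoped Combinatorics.Additive

variable {G : Type*} [AddCommGroup G] [DecidableEq G]

theorem addConvolution_eq_card_filter_sub_mem (A B : Finset G) (x : G) :
    A.addConvolution B x = #{a ∈ A | x - a ∈ B} := by
  rw [← card_inter_vadd_neg, ← filter_mem_eq_inter]
  congr 1
  refine filter_congr fun a _ ↦ ?_
  rw [← neg_vadd_mem_iff, mem_neg', vadd_eq_add, neg_add_rev, neg_neg, neg_add_eq_sub]

theorem sum_addConvolution {A B S : Finset G} (h : A + B ⊆ S) :
    ∑ x ∈ S, A.addConvolution B x = #A * #B := by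
  rw [← card_product, card_eq_sum_card_fiberwise (f := fun p : G × G ↦ p.1 + p.2)
    fun p hp ↦ h (add_mem_add (mem_product.1 hp).1 (mem_product.1 hp).2)]
  rfl

theorem sum_card_inter_vadd {A B S : Finset G} (h : A - B ⊆ S) :
    ∑ x ∈ S, #(A ∩ (x +ᵥ B)) = #A * #B := by
  simp only [card_inter_vadd]
  rw [sum_addConvolution (by rwa [← sub_eq_add_neg]), card_neg]

theorem sum_card_inter_vadd_mul_card_inter_vadd {A B S : Finset G} (h : A - A ⊆ S) :
    ∑ x ∈ S, #(A ∩ (x +ᵥ A)) * #(B ∩ (x +ᵥ B)) = E[A, B] := by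
  have hmaps (q) (hq : q ∈ {q ∈ (A ×ˢ A) ×ˢ B ×ˢ B | q.1.1 + q.2.1 = q.1.2 + q.2.2}) :
      q.1.1 - q.1.2 ∈ S := by
    simp only [mem_filter, mem_product] at hq
    exact h (sub_mem_sub hq.1.1.1 hq.1.1.2)
  rw [addEnergy, card_eq_sum_card_fiberwise hmaps]
  refine sum_congr rfl fun x _ ↦ ?_
  rw [card_inter_vadd, card_inter_vadd, ← card_sub_eq, ← card_sub_eq, ← card_product]
  refine card_equiv ((Equiv.refl _).prodCongr (Equiv.prodComm _ _)) fun ⟨⟨a, a'⟩, b, b'⟩ ↦ ?_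
  have add_eq_iff : a + b = a' + b' ↔ a - a' = b' - b := by
    rw [sub_eq_sub_iff_add_eq_add, add_comm b']
  simp only [mem_product, mem_filter, Equiv.prodCongr_apply, Equiv.coe_refl,
    Equiv.coe_prodComm, Prod.map_apply, id_eq, Prod.swap_prod_mk]
  grind

theorem addEnergy_neg_right (A B : Finset G) : E[A, -B] = E[A, B] := by
  refine card_equiv ((Equiv.refl _).prodCongr
    ((Equiv.prodComm _ _).trans ((Equiv.neg G).prodCongr (Equiv.neg G)))) fun ⟨⟨a, a'⟩, b, b'⟩ ↦ ?_
  have add_eq_iff : a + b = a' + b' ↔ a + -b' = a' + -b := by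
    rw [← sub_eq_add_neg, ← sub_eq_add_neg, sub_eq_sub_iff_add_eq_add]
  simp only [mem_filter, mem_product, mem_neg', add_eq_iff, Equiv.prodCongr_apply, Equiv.coe_refl,
    Equiv.coe_trans, Equiv.neg_apply, Equiv.coe_prodComm, Prod.map_apply, id_eq,
    Function.comp_apply, Prod.swap_prod_mk]
  grind

theorem sq_card_mul_card_le_card_sub_mul_addEnergy (A B : Finset G) :
    (#A * #B) ^ 2 ≤ #(A - B) * E[A, B] := by
  simpa only [mul_pow, sub_eq_add_neg, card_neg, addEnergy_neg_right] using
    le_card_add_mul_addEnergy A (-B)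

theorem inter_vadd_sub_subset (A B C : Finset G) (x : G) :
    A ∩ (x +ᵥ B) - C ⊆ (A - C) ∩ (x +ᵥ (B - C)) := by
  refine inter_sub_subset.trans_eq ?_
  rw [vadd_sub_assoc]

theorem inter_vadd_inter_vadd_comm (A : Finset G) (x y : G) :
    A ∩ (x +ᵥ A) ∩ (y +ᵥ (A ∩ (x +ᵥ A))) = A ∩ (y +ᵥ A) ∩ (x +ᵥ (A ∩ (y +ᵥ A))) := by
  rw [vadd_finset_inter, vadd_finset_inter, vadd_comm x y A]
  exact inter_inter_inter_comm _ _ _ _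

/-- The third-order additive energy `E₃(A)`: the third moment of the number `#(A ∩ (x +ᵥ A))` of
representations of `x` as a difference of two elements of `A`. -/
def thirdAddEnergy (A : Finset G) : ℕ :=
  ∑ x ∈ A - A, #(A ∩ (x +ᵥ A)) ^ 3

theorem sum_addEnergy_inter_vadd (A : Finset G) :
    ∑ x ∈ A - A, E[A ∩ (x +ᵥ A), A] = thirdAddEnergy A := by
  have sub_subset (x : G) : A ∩ (x +ᵥ A) - A ∩ (x +ᵥ A) ⊆ A - A :=
    sub_subset_sub inter_subset_left inter_subset_left
  calc ∑ x ∈ A - A, E[A ∩ (x +ᵥ A), A]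
      = ∑ x ∈ A - A, ∑ y ∈ A - A,
          #(A ∩ (x +ᵥ A) ∩ (y +ᵥ (A ∩ (x +ᵥ A)))) * #(A ∩ (y +ᵥ A)) := by
        simp only [sum_card_inter_vadd_mul_card_inter_vadd (sub_subset _)]
    _ = ∑ y ∈ A - A, (∑ x ∈ A - A, #(A ∩ (y +ᵥ A) ∩ (x +ᵥ (A ∩ (y +ᵥ A))))) *
          #(A ∩ (y +ᵥ A)) := by
        rw [sum_comm]
        simp only [inter_vadd_inter_vadd_comm A, sum_mul]
    _ = thirdAddEnergy A := by
        simp only [sum_card_inter_vadd (sub_subset _), thirdAddEnergy, pow_succ, pow_zero, one_mul]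

theorem sq_card_inter_vadd_mul_card_le (A B C : Finset G) (x : G) :
    (#(A ∩ (x +ᵥ B)) * #C) ^ 2 ≤ #((A - C) ∩ (x +ᵥ (B - C))) * E[A ∩ (x +ᵥ B), C] :=
  (sq_card_mul_card_le_card_sub_mul_addEnergy _ _).trans
    (Nat.mul_le_mul_right _ (card_le_card (inter_vadd_sub_subset A B C x)))

theorem card_pow_six_le_card_sub_mul_sq_sum_rpow (A : Finset G) :
    (#A : ℝ) ^ 6 ≤ #(A - A) * (∑ x ∈ A - A, (#(A ∩ (x +ᵥ A)) : ℝ) ^ (3 / 2 : ℝ)) ^ 2 := by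
  have sum_eq : ∑ x ∈ A - A, (#(A ∩ (x +ᵥ A)) : ℝ) = #A * #A := by
    exact_mod_cast sum_card_inter_vadd (A := A) Subset.rfl
  calc (#A : ℝ) ^ 6 = (∑ x ∈ A - A, (#(A ∩ (x +ᵥ A)) : ℝ)) ^ 3 := by rw [sum_eq]; ring
    _ ≤ _ := pow_three_sum_le_card_mul_sq_sum_rpow _ fun x _ ↦ Nat.cast_nonneg _

theorem sq_card_mul_sum_rpow_le_thirdAddEnergy_mul_addEnergy (A : Finset G) :
    (#A * ∑ x ∈ A - A, (#(A ∩ (x +ᵥ A)) : ℝ) ^ (3 / 2 : ℝ)) ^ 2 ≤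
      thirdAddEnergy A * E[A, A - A] := by
  rw [← sum_addEnergy_inter_vadd, ← sum_card_inter_vadd_mul_card_inter_vadd Subset.rfl, mul_sum]
  push_cast
  refine sum_sq_le_sum_mul_sum_of_sq_le_mul _ (fun x _ ↦ by positivity)
    (fun x _ ↦ by positivity) fun x _ ↦ ?_
  have katz_koester : ((#(A ∩ (x +ᵥ A)) : ℝ) * #A) ^ 2 ≤
      #((A - A) ∩ (x +ᵥ (A - A))) * E[A ∩ (x +ᵥ A), A] := by
    exact_mod_cast sq_card_inter_vadd_mul_card_le A A A x
  set δ : ℝ := (#(A ∩ (x +ᵥ A)) : ℝ)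
  have hδ : 0 ≤ δ := Nat.cast_nonneg _
  have rpow_sq : (δ ^ (3 / 2 : ℝ)) ^ 2 = δ ^ 3 := by
    rw [← Real.rpow_mul_natCast hδ, ← Real.rpow_natCast]
    norm_num
  calc (#A * δ ^ (3 / 2 : ℝ)) ^ 2 = δ * (δ * #A) ^ 2 := by rw [mul_pow, rpow_sq]; ring
    _ ≤ δ * (#((A - A) ∩ (x +ᵥ (A - A))) * E[A ∩ (x +ᵥ A), A]) := by gcongr
    _ = E[A ∩ (x +ᵥ A), A] * (δ * #((A - A) ∩ (x +ᵥ (A - A)))) := by ring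

theorem card_pow_eight_le_card_sub_mul_thirdAddEnergy_mul_addEnergy (A : Finset G) :
    #A ^ 8 ≤ #(A - A) * (thirdAddEnergy A * E[A, A - A]) := by
  set Δ := ∑ x ∈ A - A, (#(A ∩ (x +ᵥ A)) : ℝ) ^ (3 / 2 : ℝ)
  have : (#A : ℝ) ^ 8 ≤ #(A - A) * (thirdAddEnergy A * E[A, A - A]) := by
    calc (#A : ℝ) ^ 8 = #A ^ 2 * #A ^ 6 := by ring
      _ ≤ #A ^ 2 * (#(A - A) * Δ ^ 2) := by
        gcongr
        exact card_pow_six_le_card_sub_mul_sq_sum_rpow A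
      _ = #(A - A) * (#A * Δ) ^ 2 := by ring
      _ ≤ #(A - A) * (thirdAddEnergy A * E[A, A - A]) := by
        gcongr
        exact sq_card_mul_sum_rpow_le_thirdAddEnergy_mul_addEnergy A
  exact_mod_cast this

end AddCommGroup

section Incidences

variable {R : Type*} [CommRing R]

section IsDomain

variable [IsDomain R] [DecidableEq R]

theorem card_mul_card_le_sq_card_mul {A C : Finset R} (hA : 0 ∉ A) (hC : 0 ∉ C) :
    #A * #C ≤ #(A * C) ^ 2 := by
  rcases A.eq_empty_or_nonempty with rfl | ⟨a, ha⟩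
  · simp
  rcases C.eq_empty_or_nonempty with rfl | ⟨c, hc⟩
  · simp
  rw [sq]
  exact Nat.mul_le_mul (card_le_card_mul_right₀ hc (ne_of_mem_of_not_mem hc hC))
    (card_le_card_mul_left₀ ha (ne_of_mem_of_not_mem ha hA))

theorem sum_card_collisions_ne_le {κ : Type*} [DecidableEq κ]
    (A B : Finset R) {C : Finset R} (X : Finset R) (hC : 0 ∉ C) (k l : R → κ) :
    ∑ z ∈ X ×ˢ C, #{y ∈ collisions {a ∈ A | z.1 - a ∈ B} (fun a ↦ (k (a * z.2), l (z.1 - a))) |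
      y.1 ≠ y.2} ≤ #(collisions (A * C) k) * #(collisions B l) := by
  rw [← card_product, ← card_sigma]
  refine card_le_card_of_injOn
    (fun w ↦ ((w.2.1 * w.1.2, w.2.2 * w.1.2), (w.1.1 - w.2.1, w.1.1 - w.2.2))) ?_ ?_
  · rintro ⟨⟨x, c⟩, a, a'⟩ hw
    simp only [mem_coe, mem_sigma, mem_product, mem_filter, mem_collisions, Prod.mk.injEq] at hw ⊢
    obtain ⟨⟨-, hc⟩, ⟨⟨⟨ha, hb⟩, ha', hb'⟩, hk, hl⟩, -⟩ := hw
    exact ⟨⟨⟨mul_mem_mul ha hc, mul_mem_mul ha' hc⟩, hk⟩, ⟨hb, hb'⟩, hl⟩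
  · rintro ⟨⟨x, c⟩, a, a'⟩ hw ⟨⟨y, d⟩, b, b'⟩ - h
    simp only [mem_coe, mem_sigma, mem_product, mem_filter] at hw
    simp only [Prod.mk.injEq] at h
    obtain ⟨⟨h₁, h₂⟩, h₃, h₄⟩ := h
    have hne : a - a' ≠ 0 := sub_ne_zero.2 hw.2.2
    have hc : c ≠ 0 := fun h ↦ hC (h ▸ hw.1.2)
    obtain rfl : c = d := mul_left_cancel₀ hne (by linear_combination h₁ - h₂ + d * (h₃ - h₄))
    obtain rfl : a = b := mul_right_cancel₀ hc h₁
    obtain rfl : a' = b' := mul_right_cancel₀ hc h₂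
    obtain rfl : x = y := sub_left_injective h₃
    rfl

end IsDomain

variable [LinearOrder R] [IsStrictOrderedRing R]

theorem card_le_card_collisions_mul_sub_ne {T : Finset R} {k l : R → ℕ} {s : ℕ} {x c : R}
    (hk : Monotone k) (hl : Monotone l) (hks : ∀ a ∈ T, k (a * c) < s)
    (hls : ∀ a ∈ T, l (x - a) < s) (hs : 4 * s ≤ #T) :
    #T ≤ #{y ∈ collisions T (fun a ↦ (k (a * c), l (x - a))) | y.1 ≠ y.2} := by
  have hl_anti : Antitone fun a ↦ l (x - a) := fun a b h ↦ hl (sub_le_sub_left h x)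
  refine card_le_card_collisions_ne ?_ hs
  rcases le_total 0 c with hc | hc
  · have hk_mono : Monotone fun a ↦ k (a * c) := hk.comp (monotone_mul_right_of_nonneg hc)
    exact sq_card_le_mul_card_collisions_of_antivaryOn
      ((hk_mono.antivary hl_anti).antivaryOn _) hks hls
  · have hk_anti : Antitone fun a ↦ k (a * c) := hk.comp_antitone (antitone_mul_right hc)
    exact sq_card_le_mul_card_collisions_of_monovaryOn
      ((hk_anti.monovary hl_anti).monovaryOn _) hks hls

variable {A B C X : Finset R} {t : ℕ}

theorem card_mul_card_mul_pow_three_le_of_four_le (hC : 0 ∉ C) (ht : 4 ≤ t)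
    (hX : ∀ x ∈ X, t ≤ A.addConvolution B x) :
    #X * #C * t ^ 3 ≤ 256 * #(A * C) ^ 2 * #B ^ 2 := by
  rcases X.eq_empty_or_nonempty with rfl | ⟨x₀, hx₀⟩
  · simp
  rcases C.eq_empty_or_nonempty with rfl | ⟨c₀, hc₀⟩
  · simp
  have htP : t ≤ #(A * C) := (hX x₀ hx₀).trans <| addConvolution_le_card_left.trans <|
    card_le_card_mul_right₀ hc₀ (ne_of_mem_of_not_mem hc₀ hC)
  have htB : t ≤ #B := (hX x₀ hx₀).trans addConvolution_le_card_right
  set s := t / 4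
  obtain ⟨k, hk, hks, hkc⟩ :=
    exists_monotone_card_collisions_le (P := A * C) (s := s) (by lia) (by lia)
  obtain ⟨l, hl, hls, hlc⟩ :=
    exists_monotone_card_collisions_le (P := B) (s := s) (by lia) (by lia)
  have collisions_ge (z) (hz : z ∈ X ×ˢ C) : t ≤ #{y ∈ collisions {a ∈ A | z.1 - a ∈ B}
      (fun a ↦ (k (a * z.2), l (z.1 - a))) | y.1 ≠ y.2} := by
    obtain ⟨hx, hc⟩ := mem_product.1 hz
    have ht_le := hX _ hx
    rw [addConvolution_eq_card_filter_sub_mem] at ht_le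
    refine ht_le.trans (card_le_card_collisions_mul_sub_ne (s := s) hk hl (fun a ha ↦ ?_)
      (fun a ha ↦ ?_) (by lia))
    · exact hks _ (mul_mem_mul (mem_filter.1 ha).1 hc)
    · exact hls _ (mem_filter.1 ha).2
  have count : #X * #C * t ≤ #(collisions (A * C) k) * #(collisions B l) := by
    rw [← card_product, ← smul_eq_mul]
    exact (card_nsmul_le_sum _ _ t collisions_ge).trans
      (sum_card_collisions_ne_le A B X hC k l)
  have ht8 : t ≤ 8 * s := by lia
  calc #X * #C * t ^ 3 = #X * #C * t * t ^ 2 := by ring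
    _ ≤ #(collisions (A * C) k) * #(collisions B l) * (8 * s) ^ 2 := by gcongr
    _ = 64 * (s * #(collisions (A * C) k)) * (s * #(collisions B l)) := by ring
    _ ≤ 64 * (2 * #(A * C) ^ 2) * (2 * #B ^ 2) := by gcongr
    _ = 256 * #(A * C) ^ 2 * #B ^ 2 := by ring

theorem card_mul_card_mul_pow_three_le (hA : 0 ∉ A) (hC : 0 ∉ C)
    (hX : ∀ x ∈ X, t ≤ A.addConvolution B x) :
    #X * #C * t ^ 3 ≤ 256 * #(A * C) ^ 2 * #B ^ 2 := by
  rcases le_or_gt 4 t with ht | ht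
  · exact card_mul_card_mul_pow_three_le_of_four_le hC ht hX
  rcases t.eq_zero_or_pos with rfl | ht0
  · simp
  have X_subset : X ⊆ A + B := fun x hx ↦ addConvolution_pos.1 (ht0.trans_le (hX x hx))
  calc #X * #C * t ^ 3 ≤ #A * #B * #C * 4 ^ 3 := by
        gcongr
        exact (card_le_card X_subset).trans card_add_le
    _ = 64 * (#A * #C) * #B := by ring
    _ ≤ 256 * #(A * C) ^ 2 * #B ^ 2 := by
        gcongr
        · lia
        · exact card_mul_card_le_sq_card_mul hA hC
        · exact Nat.le_self_pow two_ne_zero _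

theorem card_filter_le_addConvolution_mul_pow_three_le (hA : 0 ∉ A) (hC : 0 ∉ C)
    (hC' : C.Nonempty) (t : ℕ) :
    (#{x ∈ A + B | t ≤ A.addConvolution B x} : ℝ) * t ^ 3 ≤
      256 * #(A * C) ^ 2 * #B ^ 2 / #C := by
  have hC0 : (0 : ℝ) < #C := by exact_mod_cast hC'.card_pos
  rw [le_div_iff₀ hC0, mul_right_comm]
  exact_mod_cast card_mul_card_mul_pow_three_le hA hC fun x hx ↦ (mem_filter.1 hx).2

theorem sum_addConvolution_pow_three_le (hA : 0 ∉ A) (hC : 0 ∉ C) (hC' : C.Nonempty) :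
    ∑ x ∈ A + B, (A.addConvolution B x : ℝ) ^ 3 ≤
      768 * #(A * C) ^ 2 * #B ^ 2 / #C * (1 + Real.log #A) := by
  refine (sum_pow_three_le_of_card_mul_pow_three_le
    (card_filter_le_addConvolution_mul_pow_three_le hA hC hC')
    fun x _ ↦ addConvolution_le_card_left).trans_eq ?_
  ring

open scoped Combinatorics.Additive

theorem addEnergy_le_mul_sqrt (hA : 0 ∉ A) (hC : 0 ∉ C) (hC' : C.Nonempty) :
    (E[A, B] : ℝ) ≤ 514 * #(A * C) * #B * √(#A * #B / #C) := by
  rcases A.eq_empty_or_nonempty with rfl | hA'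
  · simp
  rcases B.eq_empty_or_nonempty with rfl | hB'
  · simp
  have hA0 : (0 : ℝ) < #A := by exact_mod_cast hA'.card_pos
  have hB1 : (1 : ℝ) ≤ #B := by exact_mod_cast hB'.card_pos
  have : (0 : ℝ) < #C := by exact_mod_cast hC'.card_pos
  have hAC : (#A * #C : ℝ) ≤ #(A * C) ^ 2 := by exact_mod_cast card_mul_card_le_sq_card_mul hA hC
  have energy_eq : (E[A, B] : ℝ) = ∑ x ∈ A + B, (A.addConvolution B x : ℝ) ^ 2 := by
    exact_mod_cast addEnergy_eq_sum_sq' A B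
  have mass_eq : ∑ x ∈ A + B, (A.addConvolution B x : ℝ) = #A * #B := by
    exact_mod_cast sum_addConvolution (A := A) (B := B) Subset.rfl
  set p : ℝ := (#(A * C) : ℝ)
  set v := √(#A * #B / #C : ℝ)
  have hv : v ^ 2 = #A * #B / #C := Real.sq_sqrt (by positivity)
  have hv0 : 0 < v := Real.sqrt_pos.2 (by positivity)
  have hu : 1 ≤ p * v / #A := by
    rw [one_le_div hA0, ← pow_le_pow_iff_left₀ hA0.le (by positivity) two_ne_zero, mul_pow, hv]
    calc (#A : ℝ) ^ 2 = #A * #C * (#A * 1 / #C) := by field_simp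
      _ ≤ p ^ 2 * (#A * #B / #C) := by gcongr
  calc (E[A, B] : ℝ) ≤ 2 * (p * v / #A) * (#A * #B) +
        2 * (256 * p ^ 2 * #B ^ 2 / #C) / (p * v / #A) := by
        rw [energy_eq, ← mass_eq]
        exact sum_sq_le_of_card_mul_pow_three_le
          (card_filter_le_addConvolution_mul_pow_three_le hA hC hC') hu
    _ = 514 * p * #B * v := by
      have hp0 : p ≠ 0 := by rintro h; norm_num [h] at hu
      field_simp
      rw [hv]
      field_simp
      ring

end Incidences

section SumProduct

open scoped Combinatorics.Additive

variable {R : Type*} [CommRing R] [LinearOrder R] [IsStrictOrderedRing R] {A : Finset R}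

theorem thirdAddEnergy_le (hA : 0 ∉ A) :
    (thirdAddEnergy A : ℝ) ≤ 768 * #(A * A) ^ 2 * #A * (1 + Real.log #A) := by
  rcases A.eq_empty_or_nonempty with rfl | hA'
  · simp [thirdAddEnergy]
  have hA0 : (#A : ℝ) ≠ 0 := by exact_mod_cast hA'.card_pos.ne'
  calc (thirdAddEnergy A : ℝ) = ∑ x ∈ A + -A, (A.addConvolution (-A) x : ℝ) ^ 3 := by
        simp only [thirdAddEnergy, card_inter_vadd, sub_eq_add_neg, Nat.cast_sum, Nat.cast_pow]
    _ ≤ 768 * #(A * A) ^ 2 * #(-A) ^ 2 / #A * (1 + Real.log #A) :=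
        sum_addConvolution_pow_three_le hA hA hA'
    _ = 768 * #(A * A) ^ 2 * #A * (1 + Real.log #A) := by
        rw [card_neg]
        field_simp

theorem card_pow_le_card_mul_pow_mul_card_sub_pow_of_zero_notMem (hA : 0 ∉ A) :
    (#A : ℝ) ^ 14 ≤
      (768 * 514) ^ 2 * #(A * A) ^ 6 * #(A - A) ^ 5 * (1 + Real.log #A) ^ 2 := by
  rcases A.eq_empty_or_nonempty with rfl | hA'
  · simp
  have hn : (0 : ℝ) < #A := by exact_mod_cast hA'.card_pos
  have schoen_shkredov : (#A : ℝ) ^ 8 ≤ #(A - A) * (thirdAddEnergy A * E[A, A - A]) := by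
    exact_mod_cast card_pow_eight_le_card_sub_mul_thirdAddEnergy_mul_addEnergy A
  have third_le := thirdAddEnergy_le hA
  have energy_le : (E[A, A - A] : ℝ) ≤ 514 * #(A * A) * #(A - A) * √(#(A - A)) := by
    simpa only [mul_div_cancel_left₀ _ hn.ne'] using
      addEnergy_le_mul_sqrt (B := A - A) hA hA hA'
  set n : ℝ := (#A : ℝ)
  set p : ℝ := (#(A * A) : ℝ)
  set d : ℝ := (#(A - A) : ℝ)
  set L := 1 + Real.log n
  have hd : 0 ≤ d := Nat.cast_nonneg _
  have hp : 0 ≤ p := Nat.cast_nonneg _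
  have pow_seven_le : n ^ 7 ≤ 768 * 514 * (p ^ 3 * d ^ 2 * √d * L) := by
    refine le_of_mul_le_mul_right ?_ hn
    calc n ^ 7 * n = n ^ 8 := by ring
      _ ≤ d * (thirdAddEnergy A * E[A, A - A]) := schoen_shkredov
      _ ≤ d * ((768 * p ^ 2 * n * L) * (514 * p * d * √d)) := by gcongr
      _ = 768 * 514 * (p ^ 3 * d ^ 2 * √d * L) * n := by ring
  calc n ^ 14 = (n ^ 7) ^ 2 := by ring
    _ ≤ (768 * 514 * (p ^ 3 * d ^ 2 * √d * L)) ^ 2 := by gcongr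
    _ = (768 * 514) ^ 2 * p ^ 6 * d ^ 4 * √d ^ 2 * L ^ 2 := by ring
    _ = (768 * 514) ^ 2 * p ^ 6 * d ^ 5 * L ^ 2 := by rw [Real.sq_sqrt hd]; ring

theorem card_pow_le_card_mul_pow_mul_card_sub_pow (hA : 2 ≤ #A) :
    (#A : ℝ) ^ 14 ≤
      2 ^ 14 * (768 * 514 * 3) ^ 2 * #(A * A) ^ 6 * #(A - A) ^ 5 * Real.log #A ^ 2 := by
  set A' := A.erase 0
  have card_le : (#A : ℝ) ≤ 2 * #A' := by
    have : #A - 1 ≤ #A' := pred_card_le_card_erase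
    exact_mod_cast (by lia : #A ≤ 2 * #A')
  have subset : A' ⊆ A := erase_subset 0 A
  have hA' : (1 : ℝ) ≤ #A' := by
    have : (2 : ℝ) ≤ #A := by exact_mod_cast hA
    linarith
  have log_le : Real.log #A' ≤ Real.log #A := by gcongr
  have one_add_log_le : 1 + Real.log #A' ≤ 3 * Real.log #A := by
    have : Real.log 2 ≤ Real.log #A := Real.log_le_log two_pos (by exact_mod_cast hA)
    linarith [Real.log_two_gt_d9]
  have log_nonneg : 0 ≤ Real.log #A' := Real.log_natCast_nonneg _
  calc (#A : ℝ) ^ 14 ≤ (2 * #A') ^ 14 := by gcongr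
    _ = 2 ^ 14 * (#A' : ℝ) ^ 14 := by ring
    _ ≤ 2 ^ 14 * ((768 * 514) ^ 2 * #(A' * A') ^ 6 * #(A' - A') ^ 5 *
          (1 + Real.log #A') ^ 2) := by
        gcongr
        exact card_pow_le_card_mul_pow_mul_card_sub_pow_of_zero_notMem (notMem_erase 0 A)
    _ ≤ 2 ^ 14 * ((768 * 514) ^ 2 * #(A * A) ^ 6 * #(A - A) ^ 5 * (3 * Real.log #A) ^ 2) := by
        gcongr
    _ = 2 ^ 14 * (768 * 514 * 3) ^ 2 * #(A * A) ^ 6 * #(A - A) ^ 5 * Real.log #A ^ 2 := by ring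

end SumProduct

theorem rpow_mul_rpow_div_rpow_le_of_pow_le {n m L K : ℝ} (hn : 0 ≤ n) (hm : 0 ≤ m) (hL : 0 < L)
    (hK : 0 < K) (h : n ^ 14 ≤ K * m ^ 11 * L ^ 2) :
    K⁻¹ ^ (1 / 11 : ℝ) * n ^ (14 / 11 : ℝ) / L ^ (2 / 11 : ℝ) ≤ m := by
  calc K⁻¹ ^ (1 / 11 : ℝ) * n ^ (14 / 11 : ℝ) / L ^ (2 / 11 : ℝ)
      = (K⁻¹ * n ^ 14 / L ^ 2) ^ (1 / 11 : ℝ) := by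
        rw [Real.div_rpow (by positivity) (by positivity),
          Real.mul_rpow (by positivity) (by positivity), ← Real.rpow_natCast_mul hn,
          ← Real.rpow_natCast_mul hL.le]
        norm_num
    _ ≤ (m ^ 11) ^ (1 / 11 : ℝ) := by
        gcongr
        rw [div_le_iff₀ (by positivity), inv_mul_le_iff₀ hK]
        linarith
    _ = m := by rw [one_div]; exact Real.pow_rpow_inv_natCast hm (by norm_num)

theorem stmt17_general (R : Type*) [CommRing R] [LinearOrder R] [IsStrictOrderedRing R] :
    ∃ K : ℝ, 0 < K ∧ ∀ A : Finset R, 2 ≤ #A →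
      max (#(A * A) : ℝ) (#(A - A) : ℝ) ≥
        K * (#A : ℝ) ^ ((14 : ℝ) / 11) / (Real.log #A) ^ ((2 : ℝ) / 11) := by
  set C : ℝ := 2 ^ 14 * (768 * 514 * 3) ^ 2
  refine ⟨C⁻¹ ^ (1 / 11 : ℝ), by positivity, fun A hA ↦ ?_⟩
  set m : ℝ := max (#(A * A) : ℝ) (#(A - A) : ℝ)
  have hm : 0 ≤ m := le_max_of_le_left (Nat.cast_nonneg _)
  refine rpow_mul_rpow_div_rpow_le_of_pow_le (Nat.cast_nonneg _) hm
    (Real.log_pos (by exact_mod_cast hA)) (by positivity) ?_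
  calc (#A : ℝ) ^ 14 ≤ C * #(A * A) ^ 6 * #(A - A) ^ 5 * Real.log #A ^ 2 :=
        card_pow_le_card_mul_pow_mul_card_sub_pow hA
    _ ≤ C * m ^ 6 * m ^ 5 * Real.log #A ^ 2 := by
      gcongr
      · exact le_max_left _ _
      · exact le_max_right _ _
    _ = C * m ^ 11 * Real.log #A ^ 2 := by ring

theorem stmt17 : ∃ K : ℝ, 0 < K ∧
    ∀ A : Finset ℝ, (∀ a ∈ A, 0 < a) → 2 ≤ A.card →
    max ((A * A).card : ℝ) ((A - A).card : ℝ) ≥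
      K * (A.card : ℝ) ^ ((14 : ℝ) / 11) / (Real.log A.card) ^ ((2 : ℝ) / 11) := by
  obtain ⟨K, hK, h⟩ := stmt17_general ℝ
  exact ⟨K, hK, fun A _ hA ↦ h A hA⟩
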